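/- The credits distributed by a single batch to jobs assigned to intervals of type at most k total at most 2^{k+1}: let 𝒜 = {(I, t_I, J_I)} be a valid interval assignment for a finite job set J, and for an assigned job j let I(j) denote the unique tuple of 𝒜 whose job set contains j. Let k ≥ 0, let τ ∈ ℤ, and let F ⊆ J be any set of jobs with r_j ≤ τ ≤ d_j for every j ∈ F. Then Σ 2^{t_{I(j)}}/|J_{I(j)}| ≤ 2^{k+1}, where the sum ranges over the assigned jobs j ∈ F with t_{I(j)} ≤ k. -/

import Mathlib

structure SchedInstance where
  jobs : Finset ℕ
  r : ℕ → ℤ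
  d : ℕ → ℤ
  window : ∀ j ∈ jobs, r j ≤ d j

structure IAItem where
  lo : ℤ
  hi : ℤ
  itype : ℕ
  ijobs : Finset ℕ
deriving DecidableEq

def ValidAssignment (B : ℕ → ℕ) (P : SchedInstance) (A : Finset IAItem) : Prop :=
  (∀ e ∈ A, if e.itype = 0 then e.ijobs.card = 1 else e.ijobs.card = B (e.itype - 1)) ∧
  (∀ e ∈ A, ∀ j ∈ e.ijobs, j ∈ P.jobs ∧ e.lo ≤ P.r j ∧ P.d j ≤ e.hi) ∧
  (∀ e ∈ A, ∀ e' ∈ A, e ≠ e' → e.itype = e'.itype →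
      Set.Icc e.lo e.hi ∩ Set.Icc e'.lo e'.hi = ∅) ∧
  (∀ e ∈ A, ∀ e' ∈ A, e ≠ e' → Disjoint e.ijobs e'.ijobs)

/-- At most one interval of each type contains a job whose window contains `τ`. -/
theorem ValidAssignment.itype_injOn {B : ℕ → ℕ} {P : SchedInstance} {A : Finset IAItem}
    (hA : ValidAssignment B P A) {τ : ℤ} {F : Finset ℕ}
    (hFwin : ∀ j ∈ F, P.r j ≤ τ ∧ τ ≤ P.d j) :
    Set.InjOn IAItem.itype {e | e ∈ A ∧ (e.ijobs ∩ F).Nonempty} := by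
  obtain ⟨-, hwin, hdisj, -⟩ := hA
  have mem_Icc : ∀ e ∈ A, (e.ijobs ∩ F).Nonempty → τ ∈ Set.Icc e.lo e.hi := by
    rintro e he ⟨j, hj⟩
    rw [Finset.mem_inter] at hj
    obtain ⟨-, hlo, hhi⟩ := hwin e he j hj.1
    obtain ⟨hr, hd⟩ := hFwin j hj.2
    exact ⟨hlo.trans hr, hd.trans hhi⟩
  rintro e ⟨he, hne⟩ e' ⟨he', hne'⟩ htype
  by_contra hee
  have hmem : τ ∈ Set.Icc e.lo e.hi ∩ Set.Icc e'.lo e'.hi :=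
    ⟨mem_Icc e he hne, mem_Icc e' he' hne'⟩
  rw [hdisj e he e' he' hee htype] at hmem
  exact hmem

/-- A single interval of type `t` hands out at most `2 ^ t` credits. -/
theorem IAItem.credits_le (e : IAItem) (F : Finset ℕ) :
    ((e.ijobs ∩ F).card : ℝ) * ((2 : ℝ) ^ e.itype / (e.ijobs.card : ℝ)) ≤ 2 ^ e.itype := by
  have hcard : ((e.ijobs ∩ F).card : ℝ) ≤ e.ijobs.card := by
    exact_mod_cast Finset.card_le_card Finset.inter_subset_left
  rw [mul_div_left_comm]
  exact mul_le_of_le_one_right (by positivity) (div_le_one_of_le₀ hcard (by positivity))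

/-- the credits given to jobs of `F` (all of whose windows contain a
common time `τ`) that are assigned to interval-tuples of type at most `k` total at
most `2^(k+1)`.  Since every job lies in at most one tuple, the sum over assigned
jobs `j ∈ F` with `t_{I(j)} ≤ k` of `2^{t_{I(j)}} / |J_{I(j)}|` is written as a sum
over the tuples of type at most `k`. -/
theorem credits_small_types_bound
    (B : ℕ → ℕ) (hB1 : ∀ k', 1 ≤ B k') (hBmono : StrictMono B)
    (P : SchedInstance) (A : Finset IAItem) (hA : ValidAssignment B P A)
    (k : ℕ) (τ : ℤ) (F : Finset ℕ) (hF : F ⊆ P.jobs)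
    (hFwin : ∀ j ∈ F, P.r j ≤ τ ∧ τ ≤ P.d j) :
    ∑ e ∈ A.filter (fun e => e.itype ≤ k),
        ((e.ijobs ∩ F).card : ℝ) * ((2 : ℝ) ^ e.itype / (e.ijobs.card : ℝ))
      ≤ (2 : ℝ) ^ (k + 1) := by
  classical
  set S := (A.filter (fun e => e.itype ≤ k)).filter (fun e => (e.ijobs ∩ F).Nonempty) with hS
  have hinj : Set.InjOn IAItem.itype (S : Set IAItem) :=
    (hA.itype_injOn hFwin).mono fun e he => by
      simp only [hS, Finset.coe_filter, Finset.mem_filter, Set.mem_ofPred_eq] at he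
      exact ⟨he.1.1, he.2⟩
  have himage : S.image IAItem.itype ⊆ Finset.range (k + 1) := by
    intro t ht
    obtain ⟨e, he, rfl⟩ := Finset.mem_image.mp ht
    have hle := (Finset.mem_filter.mp (Finset.mem_filter.mp he).1).2
    exact Finset.mem_range.mpr (Nat.lt_succ_of_le hle)
  calc ∑ e ∈ A.filter (fun e => e.itype ≤ k),
        ((e.ijobs ∩ F).card : ℝ) * ((2 : ℝ) ^ e.itype / (e.ijobs.card : ℝ))
      = ∑ e ∈ S, ((e.ijobs ∩ F).card : ℝ) * ((2 : ℝ) ^ e.itype / (e.ijobs.card : ℝ)) := by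
        refine (Finset.sum_filter_of_ne fun e _ hne => ?_).symm
        by_contra hempty
        rw [Finset.not_nonempty_iff_eq_empty] at hempty
        simp [hempty] at hne
    _ ≤ ∑ e ∈ S, (2 : ℝ) ^ e.itype := Finset.sum_le_sum fun e _ => e.credits_le F
    _ = ∑ t ∈ S.image IAItem.itype, (2 : ℝ) ^ t := (Finset.sum_image hinj).symm
    _ ≤ ∑ t ∈ Finset.range (k + 1), (2 : ℝ) ^ t :=
        Finset.sum_le_sum_of_subset_of_nonneg himage fun _ _ _ => by positivity
    _ ≤ 2 ^ (k + 1) := by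
        rw [geom_sum_eq (by norm_num)]
        norm_num
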